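/- For every positive integer n: (i) Binary(q_n) holds and Leaves(q_n) = n, i.e. q_n is the Matula number of the n-leaf binary caterpillar F_n; and (ii) for every positive integer m with Topological(m) and Leaves(m) = n, one has m ≤ q_n. In other words, among all topological trees with n leaves, the binary caterpillar F_n has the greatest Matula number, and M(F_n) = q_n. -/

import Mathlib

/-- `nthPrime m` is the `m`-th prime number in ascending order (1-indexed):
`nthPrime 1 = 2`, `nthPrime 2 = 3`, `nthPrime 3 = 5`, `nthPrime 4 = 7`, ... -/
noncomputable def nthPrime (m : ℕ) : ℕ := Nat.nth Nat.Prime (m - 1)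

/-- `MatulaTopological n` says that `n` is the Matula number of a topological tree
(a rooted tree with no vertex of outdegree 1): `MatulaTopological 1` holds, and for
`n > 1`, `MatulaTopological n` holds iff `n` has at least two prime factors counted
with multiplicity and `MatulaTopological m` holds for every positive `m` such that the
prime `nthPrime m` divides `n`.  (Since `nthPrime m ∣ n` forces `m < n`, this
recursion is well-founded, so the inductive predicate is its unique fixed point.) -/
inductive MatulaTopological : ℕ → Prop
  | one : MatulaTopological 1
  | node (n : ℕ) (hn : 1 < n) (hbranches : 2 ≤ n.primeFactorsList.length)
      (hrec : ∀ m : ℕ, 1 ≤ m → nthPrime m ∣ n → MatulaTopological m) :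
      MatulaTopological n

/-- `MatulaBinary n` says that `n` is the Matula number of a binary tree (every vertex
has outdegree 0 or 2): `MatulaBinary 1` holds, and for `n > 1`, `MatulaBinary n` holds
iff `n = nthPrime a * nthPrime b` for some positive `a`, `b` with `MatulaBinary a`
and `MatulaBinary b`. -/
inductive MatulaBinary : ℕ → Prop
  | one : MatulaBinary 1
  | node (a b : ℕ) (ha : 1 ≤ a) (hb : 1 ≤ b)
      (hA : MatulaBinary a) (hB : MatulaBinary b) :
      MatulaBinary (nthPrime a * nthPrime b)

lemma count_prime_add_two_le (t : ℕ) (ht : 2 ≤ t) : Nat.count Nat.Prime t + 2 ≤ t := by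
  induction t, ht using Nat.le_induction with
  | base =>
      simp [Nat.count_succ, Nat.count_zero]
      exact ⟨Nat.not_prime_zero, Nat.not_prime_one⟩
  | succ n hn ih =>
      have : Nat.count Nat.Prime (n + 1) ≤ Nat.count Nat.Prime n + 1 := by
        rw [Nat.count_succ]; split <;> omega
      omega

/-- `matulaLeaves n` is the number of leaves of the rooted tree with Matula number `n`:
`matulaLeaves 1 = 1`, and if `n > 1` has multiset of prime factors
`nthPrime m₁, …, nthPrime m_r` (counted with multiplicity), then
`matulaLeaves n = matulaLeaves m₁ + ⋯ + matulaLeaves m_r`.  Here the 1-indexed prime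
index of a prime factor `t` is recovered as `Nat.count Nat.Prime t + 1`, since
`nthPrime (Nat.count Nat.Prime t + 1) = Nat.nth Nat.Prime (Nat.count Nat.Prime t) = t`
for prime `t`. -/
def matulaLeaves (n : ℕ) : ℕ :=
  if n ≤ 1 then 1
  else (n.primeFactorsList.attach.map
    (fun t => matulaLeaves (Nat.count Nat.Prime t.1 + 1))).sum
decreasing_by
  rename_i hn
  have hmem := t.2
  have hp : (t : ℕ).Prime := Nat.prime_of_mem_primeFactorsList hmem
  have hdvd : (t : ℕ) ∣ n := Nat.dvd_of_mem_primeFactorsList hmem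
  have hle : (t : ℕ) ≤ n := Nat.le_of_dvd (by omega) hdvd
  have := count_prime_add_two_le t.1 hp.two_le
  omega

/-- The sequence `(q_k)_{k ≥ 1}` with `q 1 = 1` and `q k = 2 * nthPrime (q (k-1))` for
`k > 1` (the value `q 0 = 1` is junk); `q n` is the Matula number of the `n`-leaf binary
caterpillar `F_n`, since `M(F_1) = 1` and `M(F_k) = p_1 · p_{M(F_{k-1})} = 2 · p_{M(F_{k-1})}`. -/
noncomputable def q : ℕ → ℕ
  | 0 => 1
  | 1 => 1
  | (k+2) => 2 * nthPrime (q (k+1))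


noncomputable def PP (k : ℕ) : ℕ := nthPrime (q k)

lemma nthPrime_prime (m : ℕ) : (nthPrime m).Prime := Nat.prime_nth_prime _

lemma nthPrime_mono {a b : ℕ} (h : a ≤ b) : nthPrime a ≤ nthPrime b :=
  Nat.nth_monotone Nat.infinite_setOfPred_prime (by omega)

lemma nthPrime_idx {t : ℕ} (ht : t.Prime) : nthPrime (Nat.count Nat.Prime t + 1) = t := by
  simp [nthPrime, Nat.nth_count ht]

lemma idx_nthPrime {m : ℕ} (hm : 1 ≤ m) : Nat.count Nat.Prime (nthPrime m) + 1 = m := by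
  have := Nat.primeCounting'_nth_eq (m - 1)
  unfold Nat.primeCounting' at this
  unfold nthPrime
  omega

lemma lt_nthPrime {m : ℕ} (hm : 1 ≤ m) : m + 1 ≤ nthPrime m := by
  have := Nat.add_two_le_nth_prime (m - 1)
  unfold nthPrime
  omega

lemma pi_nthPrime {m : ℕ} (hm : 1 ≤ m) : Nat.primeCounting (nthPrime m) = m := by
  have h := idx_nthPrime hm
  unfold Nat.primeCounting Nat.primeCounting'
  rw [Nat.count_succ, if_pos (nthPrime_prime m)]
  exact h

lemma q_succ {k : ℕ} (hk : 1 ≤ k) : q (k + 1) = 2 * PP k := by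
  obtain ⟨j, rfl⟩ : ∃ j, k = j + 1 := ⟨k - 1, by omega⟩
  rfl

lemma q_pos (k : ℕ) : 1 ≤ q k := by
  match k with
  | 0 => simp [q]
  | 1 => simp [q]
  | k + 2 =>
    have := (nthPrime_prime (q (k+1))).two_le
    simp only [q]; omega

lemma PP_pos (k : ℕ) : 2 ≤ PP k := (nthPrime_prime _).two_le

lemma PP_double {k : ℕ} (hk : 1 ≤ k) : 2 * PP k ≤ PP (k + 1) := by
  have := lt_nthPrime (q_pos (k+1))
  rw [PP, q_succ hk] at *
  rw [← PP] at *
  unfold PP at *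
  rw [q_succ hk]
  unfold PP
  omega

lemma PP_mono {a b : ℕ} (ha : 1 ≤ a) (h : a ≤ b) : PP a ≤ PP b := by
  induction b, h using Nat.le_induction with
  | base => exact le_rfl
  | succ n hn ih => have := PP_double (show 1 ≤ n by omega); omega

lemma leaves_one : matulaLeaves 1 = 1 := by
  rw [matulaLeaves]; simp

lemma leaves_eq {n : ℕ} (hn : 1 < n) : matulaLeaves n =
    (n.primeFactorsList.map (fun t => matulaLeaves (Nat.count Nat.Prime t + 1))).sum := by
  rw [matulaLeaves, if_neg (by omega)]
  congr 1
  exact List.attach_map_val (f := fun t => matulaLeaves (Nat.count Nat.Prime t + 1))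

lemma leaves_pos (n : ℕ) : 1 ≤ matulaLeaves n := by
  induction n using Nat.strong_induction_on with
  | _ n ih =>
    rcases Nat.lt_or_ge 1 n with h | h
    · rw [leaves_eq h]
      have hp := Nat.minFac_prime (show n ≠ 1 by omega)
      have hmem : n.minFac ∈ n.primeFactorsList := by
        rw [Nat.mem_primeFactorsList (by omega)]
        exact ⟨hp, Nat.minFac_dvd n⟩
      have h1 := count_prime_add_two_le _ hp.two_le
      have h2 := Nat.minFac_le (show 0 < n by omega)
      have h3 := ih (Nat.count Nat.Prime n.minFac + 1) (by omega)
      refine h3.trans (List.single_le_sum (by simp) _ ?_)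
      exact List.mem_map.2 ⟨_, hmem, rfl⟩
    · rw [matulaLeaves, if_pos h]

lemma leaves_caterpillar {m : ℕ} (hm : 1 ≤ m) :
    matulaLeaves (2 * nthPrime m) = 1 + matulaLeaves m := by
  have hp := nthPrime_prime m
  have := hp.two_le
  rw [leaves_eq (by omega)]
  have hperm := Nat.perm_primeFactorsList_mul (show 2 ≠ 0 by omega) hp.ne_zero
  rw [(hperm.map _).sum_eq, Nat.primeFactorsList_prime hp,
    Nat.primeFactorsList_prime Nat.prime_two]
  have h2 : Nat.count Nat.Prime 2 = 0 := by
    have := count_prime_add_two_le 2 le_rfl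
    omega
  simp [idx_nthPrime hm, h2, leaves_one]

lemma nthPrime_one : nthPrime 1 = 2 := by
  simp [nthPrime, Nat.nth_prime_zero_eq_two]

lemma part_one (n : ℕ) (hn : 1 ≤ n) : MatulaBinary (q n) ∧ matulaLeaves (q n) = n := by
  induction n, hn using Nat.le_induction with
  | base => exact ⟨MatulaBinary.one, leaves_one⟩
  | succ n hn ih =>
    rw [q_succ hn]
    constructor
    · have := MatulaBinary.node 1 (q n) le_rfl (q_pos n) MatulaBinary.one ih.1
      rwa [nthPrime_one] at this
    · unfold PP
      rw [leaves_caterpillar (q_pos n), ih.2]; omega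



lemma PP_of_count {k x y : ℕ} (hk : q k = x + 1) (hy : y.Prime) (hc : Nat.count Nat.Prime y = x) :
    PP k = y := by
  rw [PP, hk, ← hc, nthPrime_idx hy]

lemma PP1 : PP 1 = 2 := PP_of_count (x := 0) rfl (by norm_num) (by decide +kernel)
lemma PP2 : PP 2 = 7 :=
  PP_of_count (x := 3) (by rw [q_succ (by omega), PP1]) (by norm_num) (by decide +kernel)
lemma PP3 : PP 3 = 43 :=
  PP_of_count (x := 13) (by rw [q_succ (by omega), PP2]) (by norm_num) (by decide +kernel)
def smallPrimes : List ℕ :=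
  [2, 3, 5, 7, 11, 13, 17, 19, 23, 29, 31, 37, 41, 43, 47, 53, 59, 61, 67, 71, 73, 79]

def isP (n : ℕ) : Bool := Nat.beq (Nat.gcd n 3217644767340672907899084554130) 1

def cntB (s : ℕ) : ℕ → ℕ
  | 0 => 0
  | k + 1 => cond (isP (s + k)) 1 0 + cntB s k

lemma isP_iff {n : ℕ} (h2 : 83 ≤ n) (hn : n < 6889) : isP n = true ↔ n.Prime := by
  have hL : ∀ d < 83, d.Prime → d ∈ smallPrimes := by decide +kernel
  have hL1 : ∀ d ∈ smallPrimes, 0 < d ∧ d < 83 := by decide +kernel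
  have hprod : 3217644767340672907899084554130 = smallPrimes.prod := by decide +kernel
  unfold isP
  rw [Nat.beq_eq, hprod]
  constructor
  · intro h
    by_contra hp
    have h1 := Nat.minFac_sq_le_self (show 0 < n by omega) hp
    have h3 : n.minFac < 83 := by nlinarith
    have h4 := Nat.minFac_prime (show n ≠ 1 by omega)
    have h5 : n.minFac ∣ smallPrimes.prod := List.dvd_prod (hL _ h3 h4)
    have h6 := Nat.dvd_gcd (Nat.minFac_dvd n) h5
    rw [h] at h6
    exact h4.one_lt.ne' (Nat.dvd_one.1 h6)
  · intro hp
    refine (Nat.Prime.coprime_iff_not_dvd hp).2 fun hd => ?_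
    obtain ⟨d, hd1, hd2⟩ := (Prime.dvd_prod_iff hp.prime).1 hd
    have h7 := hL1 d hd1
    have := Nat.le_of_dvd h7.1 hd2
    omega

lemma count_add_cntB (s : ℕ) (hs : 83 ≤ s) (k : ℕ) (hk : s + k ≤ 6889) :
    Nat.count Nat.Prime (s + k) = Nat.count Nat.Prime s + cntB s k := by
  induction k with
  | zero => simp [cntB]
  | succ k ih =>
    rw [← add_assoc, Nat.count_succ, ih (by omega), cntB]
    have := isP_iff (n := s + k) (by omega) (by omega)
    by_cases h : (s + k).Prime
    · rw [if_pos h, this.2 h]; simp; omega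
    · have h' : isP (s + k) = false := by
        by_contra hc
        exact h (this.1 (by simpa using hc))
      rw [if_neg h, h']; simp

lemma count_443 : Nat.count Nat.Prime 443 = 85 := by
  have h0 : Nat.count Nat.Prime 83 = 22 := by decide +kernel
  have h1 := count_add_cntB 83 (by omega) 360 (by omega)
  have e : cntB 83 360 = 63 := by decide +kernel
  norm_num only at h1
  omega

lemma PP4 : PP 4 = 443 :=
  PP_of_count (x := 85) (by rw [q_succ (by omega), PP3]) (by norm_num) count_443

lemma count_6883 : Nat.count Nat.Prime 6883 = 885 := by
  have h0 := count_443
  have h1 := count_add_cntB 443 (by omega) 1000 (by omega)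
  have h2 := count_add_cntB 1443 (by omega) 1000 (by omega)
  have h3 := count_add_cntB 2443 (by omega) 1000 (by omega)
  have h4 := count_add_cntB 3443 (by omega) 1000 (by omega)
  have h5 := count_add_cntB 4443 (by omega) 1000 (by omega)
  have h6 := count_add_cntB 5443 (by omega) 1440 (by omega)
  have e : cntB 443 1000 + cntB 1443 1000 + cntB 2443 1000 + cntB 3443 1000 + cntB 4443 1000
    + cntB 5443 1440 = 800 := by decide +kernel
  norm_num only at h1 h2 h3 h4 h5 h6
  omega

lemma PP5 : PP 5 = 6883 :=
  PP_of_count (x := 885) (by rw [q_succ (by omega), PP4]) (by norm_num) count_6883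
lemma q2 : q 2 = 4 := by rw [q_succ (by omega), PP1]
lemma q3 : q 3 = 14 := by rw [q_succ (by omega), PP2]
lemma q4 : q 4 = 86 := by rw [q_succ (by omega), PP3]
lemma q5 : q 5 = 886 := by rw [q_succ (by omega), PP4]
lemma q6 : q 6 = 13766 := by rw [q_succ (by omega), PP5]

lemma pi_le_half (m : ℕ) : 2 * Nat.primeCounting m ≤ m + 2 := by
  rcases Nat.lt_or_ge m 2 with h | h
  · interval_cases m <;> simp
  · obtain ⟨n, rfl⟩ := Nat.exists_eq_add_of_le h
    have h1 := Nat.primeCounting_add_le (a := 2) (k := 2) (by omega) le_rfl n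
    have h2 : Nat.primeCounting 2 = 1 := by decide +kernel
    have h3 : Nat.totient 2 = 1 := by decide +kernel
    rw [h2, h3] at h1
    omega

lemma pi_le_thirty (m : ℕ) (h : 30 ≤ m) : Nat.primeCounting m ≤ 10 + 8 * (m / 30) := by
  obtain ⟨n, rfl⟩ := Nat.exists_eq_add_of_le h
  have h1 := Nat.primeCounting_add_le (a := 30) (k := 30) (by omega) le_rfl n
  have h2 : Nat.primeCounting 30 = 10 := by decide +kernel
  have h3 : Nat.totient 30 = 8 := by decide +kernel
  rw [h2, h3] at h1
  omega

lemma core2 (P : ℕ) (h : 7 ≤ P) : 2 * Nat.primeCounting (P * 7 / 2) < P * 4 := by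
  have := pi_le_half (P * 7 / 2)
  omega

lemma core3 (P : ℕ) (h : 43 ≤ P) : 2 * Nat.primeCounting (P * 43 / 2) < P * 14 := by
  have := pi_le_thirty (P * 43 / 2) (by omega)
  omega


lemma div_strict {n p : ℕ} (h1 : n < p) (h2 : p ≤ 6 * n) :
    3 * n / p + 2 * n / p + n / p < 6 * n / p := by
  have hp : 0 < p := by omega
  have e1 := Nat.div_mul_le_self (3 * n) p
  have e2 := Nat.div_mul_le_self (2 * n) p
  have b1 : 3 * n / p < 3 := (Nat.div_lt_iff_lt_mul hp).2 (by omega)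
  have b2 : 2 * n / p < 2 := (Nat.div_lt_iff_lt_mul hp).2 (by omega)
  rw [Nat.div_eq_of_lt h1, add_zero, ← Nat.succ_le_iff, Nat.le_div_iff_mul_le hp]
  generalize 3 * n / p = u at *
  generalize 2 * n / p = v at *
  interval_cases u <;> interval_cases v <;> simp at * <;> omega

lemma prime_dvd_M {n p : ℕ} (hp : p.Prime) (h1 : n < p) (h2 : p ≤ 6 * n) :
    p ∣ (6 * n).choose (3 * n) * (3 * n).choose n := by
  have f1 := Nat.choose_mul_factorial_mul_factorial (show 3 * n ≤ 6 * n by omega)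
  have f2 := Nat.choose_mul_factorial_mul_factorial (show n ≤ 3 * n by omega)
  rw [show 6 * n - 3 * n = 3 * n by omega] at f1
  rw [show 3 * n - n = 2 * n by omega] at f2
  have c1 : (6 * n).choose (3 * n) ≠ 0 := Nat.choose_ne_zero (by omega)
  have c2 : (3 * n).choose n ≠ 0 := Nat.choose_ne_zero (by omega)
  set M := (6 * n).choose (3 * n) * (3 * n).choose n with hM
  have hM0 : M ≠ 0 := mul_ne_zero c1 c2
  have f3 : M * ((3 * n).factorial * ((2 * n).factorial * n.factorial)) = (6 * n).factorial := by
    rw [← f1, hM]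
    calc _ = (6 * n).choose (3 * n) * ((3 * n).choose n * n.factorial * (2 * n).factorial)
            * (3 * n).factorial := by ring
      _ = _ := by rw [f2]
  by_contra hnd
  have v0 : M.factorization p = 0 := Nat.factorization_eq_zero_of_not_dvd hnd
  have f4 := congrArg (fun z => Nat.factorization z p) f3
  beta_reduce at f4
  have g1 := Nat.factorial_ne_zero (3 * n)
  have g2 := Nat.factorial_ne_zero (2 * n)
  have g3 := Nat.factorial_ne_zero n
  rw [Nat.factorization_mul hM0 (by positivity), Nat.factorization_mul g1 (by positivity),
    Nat.factorization_mul g2 g3] at f4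
  simp only [Finsupp.add_apply, v0, zero_add] at f4
  set B := Nat.log p (6 * n) + 1 with hB
  have hlog : ∀ k, k ≤ 6 * n → Nat.log p k < B := fun k hk =>
    Nat.lt_succ_of_le (Nat.log_mono_right hk)
  rw [Nat.factorization_factorial hp (hlog _ (by omega)),
    Nat.factorization_factorial hp (hlog _ (by omega)),
    Nat.factorization_factorial hp (hlog _ (by omega)),
    Nat.factorization_factorial hp (hlog _ le_rfl), ← Finset.sum_add_distrib,
    ← Finset.sum_add_distrib] at f4
  refine absurd f4 (ne_of_lt (Finset.sum_lt_sum ?_ ⟨1, ?_, ?_⟩))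
  · intro i _
    have := Nat.add_div_le_add_div (2 * n) n (p ^ i)
    have h' := Nat.add_div_le_add_div (3 * n) (2 * n + n) (p ^ i)
    rw [show 3 * n + (2 * n + n) = 6 * n by ring] at h'
    omega
  · have : 0 < Nat.log p (6 * n) := Nat.log_pos hp.one_lt h2
    simp [hB]; omega
  · have := div_strict h1 h2
    simp only [pow_one]; omega

lemma M_le (n : ℕ) : (6 * n).choose (3 * n) * (3 * n).choose n ≤ 432 ^ n := by
  have h1 : (6 * n).choose (3 * n) ≤ 2 ^ (6 * n) := Nat.choose_le_two_pow _ _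
  have h2 : 4 ^ n * (3 * n).choose n ≤ 27 ^ n := by
    have := add_pow (1 : ℕ) 2 (3 * n)
    have h3 := Finset.single_le_sum (f := fun m => 1 ^ m * 2 ^ (3 * n - m) * (3 * n).choose m)
      (s := Finset.range (3 * n + 1)) (fun _ _ => Nat.zero_le _)
      (Finset.mem_range.2 (show n < 3 * n + 1 by omega))
    simp only [Nat.cast_id] at this
    rw [← this] at h3
    rw [show 3 * n - n = 2 * n by omega, pow_mul, one_pow, one_mul, pow_mul] at h3
    simpa using h3
  have h4 : 4 ^ n * ((6 * n).choose (3 * n) * (3 * n).choose n) ≤ 4 ^ n * 432 ^ n := by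
    calc _ = (6 * n).choose (3 * n) * (4 ^ n * (3 * n).choose n) := by ring
      _ ≤ 2 ^ (6 * n) * 27 ^ n := Nat.mul_le_mul h1 h2
      _ = _ := by rw [pow_mul, ← mul_pow, ← mul_pow]; norm_num
  exact Nat.le_of_mul_le_mul_left h4 (by positivity)

lemma primorial_six (n : ℕ) : primorial (6 * n) ≤ primorial n * 432 ^ n := by
  have h := primorial_add n (5 * n)
  rw [show n + 5 * n = 6 * n by ring] at h
  rw [h]
  refine Nat.mul_le_mul le_rfl (le_trans (Nat.le_of_dvd ?_ ?_) (M_le n))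
  · exact Nat.mul_pos (Nat.choose_pos (by omega)) (Nat.choose_pos (by omega))
  · refine Finset.prod_primes_dvd _ ?_ ?_
    · intro p hp
      exact (Finset.mem_filter.1 hp).2.prime
    · intro p hp
      obtain ⟨h1, h2⟩ := Finset.mem_filter.1 hp
      rw [Finset.mem_Ico] at h1
      exact prime_dvd_M h2 (by omega) (by omega)

lemma theta_six (n : ℕ) : Chebyshev.theta ((6 * n : ℕ) : ℝ) ≤
    Chebyshev.theta (n : ℝ) + n * Real.log 432 := by
  rw [Chebyshev.theta_eq_log_primorial, Chebyshev.theta_eq_log_primorial, Nat.floor_natCast,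
    Nat.floor_natCast, ← Real.log_pow, ← Real.log_mul]
  · apply Real.log_le_log
    · exact_mod_cast primorial_pos _
    · exact_mod_cast primorial_six n
  · exact_mod_cast primorial_ne_zero n
  · positivity

lemma log432 : Real.log 432 ≤ 6.07 := by
  have h : (432 : ℝ) = 2 ^ 4 * 3 ^ 3 := by norm_num
  rw [Real.log_le_iff_le_exp (by norm_num)]
  have h1 : Real.exp 6.07 = Real.exp 1 ^ 6 * Real.exp 0.07 := by
    rw [← Real.exp_nat_mul, ← Real.exp_add]; norm_num
  have h2 := Real.exp_one_gt_d9
  have h3 := Real.quadratic_le_exp_of_nonneg (show (0 : ℝ) ≤ 0.07 by norm_num)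
  rw [h1]
  calc (432 : ℝ) ≤ 2.7182818283 ^ 6 * (1 + 0.07 + 0.07 ^ 2 / 2) := by norm_num
    _ ≤ _ := by gcongr

lemma theta_nat (m : ℕ) : Chebyshev.theta (m : ℝ) ≤ 1.25 * m + 28 := by
  induction m using Nat.strong_induction_on with
  | _ m ih =>
    rcases Nat.lt_or_ge m 204 with h | h
    · have h1 := Chebyshev.theta_le_log4_mul_x (x := (m : ℝ)) (by positivity)
      have h2 : Real.log 4 ≤ 1.387 := by
        rw [show (4 : ℝ) = 2 ^ 2 by norm_num, Real.log_pow]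
        have := Real.log_two_lt_d9
        push_cast; linarith
      have h3 : (m : ℝ) ≤ 204 := by exact_mod_cast h.le
      have h4 : (0 : ℝ) ≤ m := by positivity
      nlinarith
    · set n := (m + 5) / 6 with hn
      have h1 := ih n (by omega)
      have h2 := theta_six n
      have h3 : Chebyshev.theta (m : ℝ) ≤ Chebyshev.theta ((6 * n : ℕ) : ℝ) :=
        Chebyshev.theta_mono (by exact_mod_cast (by omega : m ≤ 6 * n))
      have h4 : 6 * (n : ℝ) ≤ m + 5 := by exact_mod_cast (by omega : 6 * n ≤ m + 5)
      have h5 : (204 : ℝ) ≤ m := by exact_mod_cast h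
      have h6 := log432
      have h7 : (n : ℝ) * Real.log 432 ≤ n * 6.07 := by gcongr
      linarith

lemma theta_real {x : ℝ} (hx : 0 ≤ x) : Chebyshev.theta x ≤ 1.25 * x + 28 := by
  rw [Chebyshev.theta_eq_theta_coe_floor]
  have h1 := theta_nat ⌊x⌋₊
  have h2 := Nat.floor_le hx
  linarith

lemma pi_thirty (z : ℕ) (hz : 2 ≤ z) (lam : ℝ) (hl : 0 < lam) (hlz : Real.exp lam ≤ z) :
    (Nat.primeCounting (30 * z) : ℝ) ≤ z / 2 + 1 + (37.5 * z + 28) / lam := by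
  have hlog : lam ≤ Real.log z := (Real.le_log_iff_exp_le (by positivity)).2 hlz
  have h1 : (2 * Nat.primeCounting z : ℝ) ≤ z + 2 := by exact_mod_cast pi_le_half z
  have h2 := theta_nat (30 * z)
  have key : ((Nat.primeCounting (30 * z) : ℝ) - Nat.primeCounting z) * lam
      ≤ Chebyshev.theta ((30 * z : ℕ) : ℝ) := by
    rw [Chebyshev.theta_eq_sum_primesLE_log]
    have hsub : Nat.primesLE z ⊆ Nat.primesLE (30 * z) := Nat.primesLE_mono (by omega)
    have hc : (Nat.primeCounting (30 * z) : ℝ) - Nat.primeCounting z =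
        ((Nat.primesLE (30 * z) \ Nat.primesLE z).card : ℝ) := by
      rw [Finset.cast_card_sdiff hsub]; simp
    rw [hc, ← nsmul_eq_mul]
    have hs1 : (Nat.primesLE (30 * z) \ Nat.primesLE z).card • lam ≤
        ∑ p ∈ Nat.primesLE (30 * z) \ Nat.primesLE z, Real.log (p : ℝ) := by
      refine Finset.card_nsmul_le_sum _ _ _ ?_
      intro p hp
      rw [Finset.mem_sdiff, Nat.mem_primesLE, Nat.mem_primesLE] at hp
      have : z ≤ p := by
        by_contra hc
        exact hp.2 ⟨by omega, hp.1.2⟩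
      exact hlog.trans (Real.log_le_log (by positivity) (by exact_mod_cast this))
    refine hs1.trans ?_
    · refine Finset.sum_le_sum_of_subset_of_nonneg Finset.sdiff_subset ?_
      intro p _ _
      exact Real.log_natCast_nonneg p
  have h3 : (Nat.primeCounting (30 * z) : ℝ) - Nat.primeCounting z ≤ (37.5 * z + 28) / lam := by
    rw [le_div_iff₀ hl]
    push_cast at h2 key
    linarith
  linarith

lemma exp_nat_le (k : ℕ) : Real.exp k ≤ 2.7182818286 ^ k := by
  have := Real.exp_one_lt_d9
  rw [show (k : ℝ) = k * 1 by ring, Real.exp_nat_mul]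
  gcongr

lemma core4 (P : ℕ) (h : 443 ≤ P) : 2 * Nat.primeCounting (P * 443 / 2) < P * 86 := by
  obtain ⟨z, hz⟩ : ∃ z, z = P * 443 / 60 + 1 := ⟨_, rfl⟩
  have h0 : Nat.primeCounting (P * 443 / 2) ≤ Nat.primeCounting (30 * z) :=
    Nat.monotone_primeCounting (by omega)
  have hzl : (3270 : ℝ) ≤ z := by exact_mod_cast (by omega : 3270 ≤ z)
  have h1 := pi_thirty z (by omega) 8 (by norm_num) (by
    have := exp_nat_le 8
    push_cast at this
    refine this.trans (le_trans ?_ hzl)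
    norm_num)
  have h2 : 60 * (z : ℝ) ≤ P * 443 + 60 := by exact_mod_cast (by omega : 60 * z ≤ P * 443 + 60)
  have h3 : (443 : ℝ) ≤ P := by exact_mod_cast h
  have h4 : (Nat.primeCounting (P * 443 / 2) : ℝ) ≤ Nat.primeCounting (30 * z) := by
    exact_mod_cast h0
  have : 2 * (Nat.primeCounting (P * 443 / 2) : ℝ) < P * 86 := by linarith
  exact_mod_cast this

lemma core5 (P : ℕ) (h : 6883 ≤ P) : 2 * Nat.primeCounting (P * 6883 / 2) < P * 886 := by
  obtain ⟨z, hz⟩ : ∃ z, z = P * 6883 / 60 + 1 := ⟨_, rfl⟩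
  have h0 : Nat.primeCounting (P * 6883 / 2) ≤ Nat.primeCounting (30 * z) :=
    Nat.monotone_primeCounting (by omega)
  have hzl : (789000 : ℝ) ≤ z := by exact_mod_cast (by omega : 789000 ≤ z)
  have h1 := pi_thirty z (by omega) 13 (by norm_num) (by
    have := exp_nat_le 13
    push_cast at this
    refine this.trans (le_trans ?_ hzl)
    norm_num)
  have h2 : 60 * (z : ℝ) ≤ P * 6883 + 60 := by exact_mod_cast (by omega : 60 * z ≤ P * 6883 + 60)
  have h3 : (6883 : ℝ) ≤ P := by exact_mod_cast h
  have h4 : (Nat.primeCounting (P * 6883 / 2) : ℝ) ≤ Nat.primeCounting (30 * z) := by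
    exact_mod_cast h0
  have : 2 * (Nat.primeCounting (P * 6883 / 2) : ℝ) < P * 886 := by
    have e : (37.5 * (z : ℝ) + 28) / 13 = 37.5 / 13 * z + 28 / 13 := by ring
    linarith
  exact_mod_cast this

lemma PP6_ge : 70000 ≤ PP 6 := by
  by_contra hlt
  have h0 : Nat.primeCounting (PP 6) = 13766 := by
    rw [PP, pi_nthPrime (q_pos 6), q6]
  have h1 : Nat.primeCounting (PP 6) ≤ Nat.primeCounting (30 * 2334) :=
    Nat.monotone_primeCounting (by omega)
  have h2 := pi_thirty 2334 (by omega) 7.5 (by norm_num) (by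
    have e : Real.exp 7.5 ^ 2 = Real.exp (15 : ℕ) := by
      rw [← Real.exp_nat_mul]; norm_num
    have e2 := exp_nat_le 15
    rw [← e] at e2
    refine le_of_sq_le_sq ?_ (by positivity)
    refine e2.trans ?_
    norm_num)
  rw [h0] at h1
  have h3 : (13766 : ℝ) ≤ Nat.primeCounting (30 * 2334) := by exact_mod_cast h1
  rw [Nat.cast_ofNat] at h2
  generalize (Nat.primeCounting (30 * 2334) : ℝ) = w at *
  norm_num at h2
  linarith


lemma integral_bound {u t : ℝ} (hu : Real.exp 12 ≤ u) (hut : u ≤ t) :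
    ∫ x in u..t, Chebyshev.theta x / (x * Real.log x ^ 2) ≤ 1.51 * t / Real.log t ^ 2 := by
  have he : (4096 : ℝ) ≤ Real.exp 12 := by
    have h := Real.exp_one_gt_d9
    have : Real.exp 12 = Real.exp 1 ^ 12 := by rw [← Real.exp_nat_mul]; norm_num
    rw [this]
    calc (4096 : ℝ) = 2 ^ 12 := by norm_num
      _ ≤ _ := by gcongr; linarith
  have hlog : ∀ x, u ≤ x → 12 ≤ Real.log x := fun x hx =>
    (Real.le_log_iff_exp_le (by linarith)).2 (hu.trans hx)
  have hd : ∀ x, u ≤ x → HasDerivAt (fun x => 1.51 * x / Real.log x ^ 2)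
      ((1.51 * Real.log x ^ 2 - 1.51 * x * (2 * Real.log x * x⁻¹)) / (Real.log x ^ 2) ^ 2) x := by
    intro x hx
    have hl := hlog x hx
    have h1 : HasDerivAt (fun x : ℝ => 1.51 * x) 1.51 x := by
      simpa using (hasDerivAt_id x).const_mul (1.51 : ℝ)
    have h2 : HasDerivAt (fun x : ℝ => Real.log x ^ 2) (2 * Real.log x * x⁻¹) x := by
      have h := (Real.hasDerivAt_log (show x ≠ 0 by linarith)).fun_pow 2
      simpa using h
    exact h1.div h2 (by positivity)
  have h := intervalIntegral.integral_le_sub_of_hasDeriv_right_of_le hut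
    (g := fun x => 1.51 * x / Real.log x ^ 2)
    (g' := fun x => (1.51 * Real.log x ^ 2 - 1.51 * x * (2 * Real.log x * x⁻¹)) /
      (Real.log x ^ 2) ^ 2)
    (φ := fun x => Chebyshev.theta x / (x * Real.log x ^ 2))
    (fun x hx => (hd x hx.1).continuousAt.continuousWithinAt)
    (fun x hx => (hd x hx.1.le).hasDerivWithinAt)
    ((Chebyshev.integrableOn_theta_div_id_mul_log_sq t).mono_set
      (Set.Icc_subset_Icc (by linarith) le_rfl))
    (by
      intro x hx
      have hl := hlog x hx.1.le
      have hx0 : 4096 ≤ x := by linarith [hx.1]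
      have hth := theta_real (show 0 ≤ x by linarith)
      set L := Real.log x
      have hxp : 0 < x := by linarith
      have hLp : 0 < L := by linarith
      have e : (1.51 * L ^ 2 - 1.51 * x * (2 * L * x⁻¹)) / (L ^ 2) ^ 2
          = (1.51 * (L - 2) * x / L) / (x * L ^ 2) := by
        field_simp
      rw [e]
      refine div_le_div_of_nonneg_right ?_ (by positivity)
      rw [le_div_iff₀ hLp]
      nlinarith)
  refine h.trans ?_
  have : 0 ≤ 1.51 * u / Real.log u ^ 2 := by
    have : 0 < u := by linarith
    positivity
  linarith

lemma pi_abel {t : ℝ} (ht : Real.exp 12 ≤ t) :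
    (Nat.primeCounting ⌊t⌋₊ : ℝ) ≤
      (1.25 * t + 28) / Real.log t + 1.51 * t / Real.log t ^ 2 + 163000 := by
  have he : (4096 : ℝ) ≤ Real.exp 12 := by
    have h := Real.exp_one_gt_d9
    have : Real.exp 12 = Real.exp 1 ^ 12 := by rw [← Real.exp_nat_mul]; norm_num
    rw [this]
    calc (4096 : ℝ) = 2 ^ 12 := by norm_num
      _ ≤ _ := by gcongr; linarith
  have he2 : Real.exp 12 ≤ 162800 := by
    have := exp_nat_le 12
    push_cast at this
    refine this.trans ?_
    norm_num
  have h1 := Chebyshev.primeCounting_eq_theta_div_log_add_integral (show 2 ≤ t by linarith)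
  have h2 := Chebyshev.primeCounting_eq_theta_div_log_add_integral
    (show 2 ≤ Real.exp 12 by linarith)
  have h3 := integral_bound le_rfl ht
  have hint : ∀ a b : ℝ, 2 ≤ a → a ≤ b → IntervalIntegrable
      (fun x => Chebyshev.theta x / (x * Real.log x ^ 2)) MeasureTheory.volume a b := by
    intro a b ha hab
    rw [intervalIntegrable_iff_integrableOn_Icc_of_le hab]
    exact (Chebyshev.integrableOn_theta_div_id_mul_log_sq b).mono_set
      (Set.Icc_subset_Icc ha le_rfl)
  rw [← intervalIntegral.integral_add_adjacent_intervals
    (hint 2 (Real.exp 12) le_rfl (by linarith)) (hint (Real.exp 12) t (by linarith) ht)] at h1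
  have h4 : 0 ≤ Chebyshev.theta (Real.exp 12) / Real.log (Real.exp 12) :=
    div_nonneg (Chebyshev.theta_nonneg _) (by rw [Real.log_exp]; norm_num)
  have h5 : (Nat.primeCounting ⌊Real.exp 12⌋₊ : ℝ) ≤ 163000 := by
    have := pi_le_half ⌊Real.exp 12⌋₊
    have h6 : (2 * Nat.primeCounting ⌊Real.exp 12⌋₊ : ℝ) ≤ ⌊Real.exp 12⌋₊ + 2 := by
      exact_mod_cast this
    have h7 := Nat.floor_le (show 0 ≤ Real.exp 12 by positivity)
    linarith
  have h8 : Chebyshev.theta t / Real.log t ≤ (1.25 * t + 28) / Real.log t :=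
    div_le_div_of_nonneg_right (theta_real (by linarith)) (Real.log_nonneg (by linarith))
  linarith

lemma core_big (P x : ℕ) (hx : 1 ≤ x) (hy : 70000 ≤ nthPrime x) (hP : nthPrime x ≤ P) :
    2 * Nat.primeCounting (P * nthPrime x / 2) < P * x := by
  have hpi := pi_nthPrime hx
  generalize hyy : nthPrime x = y at *
  have hlow := (Chebyshev.psi_ge y).trans (Chebyshev.psi_le_primeCounting_mul_log y)
  rw [hpi] at hlow
  set t : ℝ := (P : ℝ) * y / 2 with ht
  have hfl : ⌊t⌋₊ = P * y / 2 := by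
    rw [ht, ← Nat.cast_mul]
    exact Nat.floor_div_ofNat _ _ |>.trans (by rw [Nat.floor_natCast])
  have hyR : (70000 : ℝ) ≤ y := by exact_mod_cast hy
  have hPR : (y : ℝ) ≤ P := by exact_mod_cast hP
  have htbig : (2450000000 : ℝ) ≤ t := by rw [ht]; nlinarith
  have hty : (y : ℝ) ^ 2 / 2 ≤ t := by rw [ht]; nlinarith
  have he2 : Real.exp 12 ≤ 162800 := by
    have := exp_nat_le 12
    push_cast at this
    refine this.trans ?_
    norm_num
  have hab := pi_abel (t := t) (by linarith)
  rw [hfl] at hab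
  have hl2a := Real.log_two_gt_d9
  have hl2b := Real.log_two_lt_d9
  set L := Real.log t with hL
  set l := Real.log (y : ℝ) with hl
  have hLl : 2 * l - 0.6932 ≤ L := by
    have h1 := Real.log_le_log (by positivity) hty
    rw [Real.log_div (by positivity) (by norm_num), Real.log_pow] at h1
    push_cast at h1
    linarith
  have hL21 : 21.6 ≤ L := by
    rw [hL, Real.le_log_iff_exp_le (by linarith)]
    have h1 : Real.exp 21.6 ^ 5 = Real.exp (108 : ℕ) := by
      rw [← Real.exp_nat_mul]; norm_num
    refine le_trans ?_ htbig
    refine le_of_pow_le_pow_left₀ (n := 5) (by norm_num) (by norm_num) ?_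
    rw [h1]
    refine (exp_nat_le 108).trans ?_
    norm_num
  have hLt : L ≤ 20.7 + t / 1000000000 := by
    have h1 : Real.log (t / 1000000000) ≤ t / 1000000000 - 1 :=
      Real.log_le_sub_one_of_pos (by linarith)
    rw [Real.log_div (by linarith) (by norm_num)] at h1
    have h2 : Real.log 1000000000 ≤ 21 := by
      rw [Real.log_le_iff_le_exp (by norm_num)]
      have h := Real.exp_one_gt_d9
      have h3 : Real.exp 21 = Real.exp 1 ^ 21 := by rw [← Real.exp_nat_mul]; norm_num
      rw [h3]
      calc (1000000000 : ℝ) ≤ 2.7 ^ 21 := by norm_num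
        _ ≤ _ := by gcongr; linarith
    linarith
  have hlpos : 0 < l := Real.log_pos (by linarith)
  have hly : Real.log ((y : ℝ) + 1) ≤ 0.0003 * y := by
    have h1 : Real.log (((y : ℝ) + 1) / 70000) ≤ ((y : ℝ) + 1) / 70000 - 1 :=
      Real.log_le_sub_one_of_pos (by positivity)
    rw [Real.log_div (by positivity) (by norm_num)] at h1
    have h2 : Real.log 70000 ≤ 12 := by
      rw [Real.log_le_iff_le_exp (by norm_num)]
      have h := Real.exp_one_gt_d9
      have h3 : Real.exp 12 = Real.exp 1 ^ 12 := by rw [← Real.exp_nat_mul]; norm_num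
      rw [h3]
      calc (70000 : ℝ) ≤ 2.7 ^ 12 := by norm_num
        _ ≤ _ := by gcongr; linarith
    linarith
  -- lower bound for x
  have hxl : 0.6928 * (y : ℝ) ≤ x * l := by nlinarith
  have hx2 : 2 * 0.6928 * (y : ℝ) ≤ x * (L + 0.6932) := by
    have : (0 : ℝ) ≤ x := by positivity
    nlinarith
  have hmain : (1.25 * t + 28) / L + 1.51 * t / L ^ 2 + 163000 < 1.3856 * t / (L + 0.6932) := by
    have hLp : 0 < L := by linarith
    have e : (1.25 * t + 28) / L + 1.51 * t / L ^ 2 + 163000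
        = (((1.25 * t + 28) + 163000 * L) * L + 1.51 * t) / L ^ 2 := by
      field_simp
      ring
    rw [e, div_lt_div_iff₀ (by positivity) (by positivity)]
    have a1 : 28 + 163000 * L ≤ 0.0017 * t := by linarith
    have a2 : ((1.25 * t + 28) + 163000 * L) * L + 1.51 * t ≤ t * (1.2517 * L + 1.51) := by
      nlinarith
    have a3 : (1.2517 * L + 1.51) * (L + 0.6932) < 1.3856 * L ^ 2 := by nlinarith
    calc _ ≤ t * (1.2517 * L + 1.51) * (L + 0.6932) := by gcongr
      _ = t * ((1.2517 * L + 1.51) * (L + 0.6932)) := by ring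
      _ < t * (1.3856 * L ^ 2) := by gcongr
      _ = _ := by ring
  have hfin : 1.3856 * t / (L + 0.6932) ≤ P * x / 2 := by
    rw [div_le_iff₀ (by linarith), ht]
    have : (0 : ℝ) ≤ P := by positivity
    nlinarith
  have : 2 * (Nat.primeCounting (P * y / 2) : ℝ) < P * x := by linarith
  exact_mod_cast this

lemma core (b : ℕ) (hb : 2 ≤ b) (P : ℕ) (hP : PP b ≤ P) :
    2 * Nat.primeCounting (P * PP b / 2) < P * q b := by
  rcases Nat.lt_or_ge b 6 with h | h
  · interval_cases b
    · rw [PP2] at *; rw [q2]; exact core2 P hP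
    · rw [PP3] at *; rw [q3]; exact core3 P hP
    · rw [PP4] at *; rw [q4]; exact core4 P hP
    · rw [PP5] at *; rw [q5]; exact core5 P hP
  · exact core_big P (q b) (q_pos b) (PP6_ge.trans (PP_mono (by omega) h)) hP

theorem PP_mul (b : ℕ) (hb : 1 ≤ b) (a : ℕ) (hab : b ≤ a) :
    PP a * PP b ≤ 2 * PP (a + b - 1) := by
  induction b, hb using Nat.le_induction with
  | base => rw [PP1, Nat.add_sub_cancel]; omega
  | succ b hb ih =>
    have h1 := ih (by omega)
    have hN : q (a + b) = 2 * PP (a + b - 1) := by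
      rw [← q_succ (by omega), Nat.sub_add_cancel (by omega)]
    have h2 := core (b + 1) (by omega) (PP a) (PP_mono (by omega) hab)
    rw [q_succ hb] at h2
    by_contra hc
    rw [show a + (b + 1) - 1 = a + b by omega] at hc
    have h3 : Nat.primeCounting (PP (a + b)) ≤ Nat.primeCounting (PP a * PP (b + 1) / 2) :=
      Nat.monotone_primeCounting (by omega)
    have h4 : Nat.primeCounting (PP (a + b)) = q (a + b) := pi_nthPrime (q_pos _)
    rw [h4, hN] at h3
    have h5 : PP a * (2 * PP b) = 2 * (PP a * PP b) := by ring
    omega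


lemma PP_mul' {a b : ℕ} (ha : 1 ≤ a) (hb : 1 ≤ b) : PP a * PP b ≤ 2 * PP (a + b - 1) := by
  rcases le_total a b with h | h
  · have := PP_mul a ha b h
    rwa [Nat.mul_comm (PP a), Nat.add_comm a]
  · exact PP_mul b hb a h

lemma list_prod_le (l : List ℕ) (f : ℕ → ℕ) (hf : ∀ t, 1 ≤ f t) (hne : l ≠ [])
    (h : ∀ t ∈ l, t ≤ PP (f t)) : l.prod ≤ PP (l.map f).sum ∧ 1 ≤ (l.map f).sum := by
  induction l with
  | nil => exact absurd rfl hne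
  | cons t l ih =>
    have ht := h t (by simp)
    by_cases hl : l = []
    · subst hl
      simpa using ⟨ht, hf t⟩
    · obtain ⟨h1, h2⟩ := ih hl (fun s hs => h s (by simp [hs]))
      simp only [List.prod_cons, List.map_cons, List.sum_cons]
      have h3 := PP_mul' (hf t) h2
      have h4 := PP_double (k := f t + (l.map f).sum - 1) (by have := hf t; omega)
      rw [show f t + (l.map f).sum - 1 + 1 = f t + (l.map f).sum by have := hf t; omega] at h4
      refine ⟨?_, by omega⟩
      calc t * l.prod ≤ PP (f t) * PP (l.map f).sum := Nat.mul_le_mul ht h1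
        _ ≤ _ := h3.trans h4

lemma part_two (m : ℕ) (h : MatulaTopological m) : m ≤ q (matulaLeaves m) := by
  induction h with
  | one => rw [leaves_one]; simp [q]
  | node n hn hb hrec ih =>
    have key : ∀ t ∈ n.primeFactorsList,
        t ≤ PP (matulaLeaves (Nat.count Nat.Prime t + 1)) := by
      intro t ht
      have hp := Nat.prime_of_mem_primeFactorsList ht
      have hd := Nat.dvd_of_mem_primeFactorsList ht
      have := ih (Nat.count Nat.Prime t + 1) (by omega) (by rwa [nthPrime_idx hp])
      have h2 := nthPrime_mono this
      rwa [nthPrime_idx hp] at h2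
    rw [leaves_eq hn]
    conv_lhs => rw [← Nat.prod_primeFactorsList (show n ≠ 0 by omega)]
    generalize n.primeFactorsList = l at *
    match l, hb with
    | t :: l, hb =>
      have hl : l ≠ [] := by rintro rfl; simp at hb
      have ht := key t (by simp)
      obtain ⟨h1, h2⟩ := list_prod_le l (fun t => matulaLeaves (Nat.count Nat.Prime t + 1))
        (fun t => leaves_pos _) hl (fun s hs => key s (by simp [hs]))
      have h0 := leaves_pos (Nat.count Nat.Prime t + 1)
      simp only [List.prod_cons, List.map_cons, List.sum_cons]
      have h3 := PP_mul' h0 h2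
      rw [← q_succ (by omega)] at h3
      rw [Nat.sub_add_cancel (by omega)] at h3
      exact (Nat.mul_le_mul ht h1).trans h3


/-- For every positive integer `n`: (i) `q n` is the Matula number of a binary tree with
`n` leaves (namely the binary caterpillar `F_n`), and (ii) every topological tree with
`n` leaves has Matula number at most `q n`.  That is, among all topological trees with
`n` leaves, the binary caterpillar `F_n` has the greatest Matula number, and `M(F_n) = q n`. -/
theorem caterpillar_maximizes_matula (n : ℕ) (hn : 1 ≤ n) :
    (MatulaBinary (q n) ∧ matulaLeaves (q n) = n) ∧
      ∀ m : ℕ, 1 ≤ m → MatulaTopological m → matulaLeaves m = n → m ≤ q n := by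
  refine ⟨part_one n hn, fun m _ hT hL => ?_⟩
  have := part_two m hT
  rwa [hL] at this
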